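/- arXiv:2203.07578 — 6 statements merged into one kernel-verified Lean document; each statement's English description precedes it below -/
import Mathlib

section
/- Let d ≥ 1, n ≥ 1, let A ⊂ ℤ be a finite set with |A| = d+2, and let z ∈ ℝ with z ≠ 0. Let V : ℤ → ℝ^{d+1} be such that for every k ∈ ℤ, every (d+1)-element subfamily of the family (V_{k+j})_{j∈A} is linearly independent. Let β : ℤ → ℝ satisfy β_k ≠ 0 and β_{k+n} = z·β_k for all k. Let a, a' : ℤ → (A → ℝ) be n-periodic (a_{k+n} = a_k and a'_{k+n} = a'_k for all k), with a_k and a'_k not identically zero for every k, and suppose ∑_{j∈A} a_k(j) • V_{k+j} = 0 and ∑_{j∈A} a'_k(j)·β_{k+j} • V_{k+j} = 0 for all k ∈ ℤ. Then there exists α : ℤ → ℝ with α_k ≠ 0 for all k, such that a'_k(j)·β_{k+j} = α_k·a_k(j) for all k ∈ ℤ, j ∈ A, and α_{k+n} = z·α_k for all k ∈ ℤ. -/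
/-!
Once one member of `(V_{k+j})_{j ∈ A}` can be removed to leave a linearly independent family, a
relation is determined by its coefficient at that member, so the relations at position `k` form a
space of dimension at most one. Hence `(a'_k(j) β_{k+j})_j` is a multiple `α_k` of `(a_k(j))_j`.
Translating `k` by the period fixes `a_k` and multiplies `a'_k(j) β_{k+j}` by `z`, so it multiplies
`α_k` by `z`.
-/

section Relations

variable {R M ι : Type*} [DecidableEq ι] [AddCommGroup M] {s : Finset ι} {v : ι → M} {i : ι}

theorem eq_zero_of_linearIndepOn_erase [Ring R] [Module R M] {c : ι → R}
    (hv : LinearIndepOn R v (s.erase i)) (hc : ∑ j ∈ s, c j • v j = 0) (hi : c i = 0) :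
    ∀ j ∈ s, c j = 0 := by
  intro j hj
  obtain rfl | hji := eq_or_ne j i
  · exact hi
  have hsum : ∑ l ∈ s.erase i, c l • v l = 0 := by
    rw [Finset.sum_erase s (by rw [hi, zero_smul]), hc]
  exact linearIndepOn_finset_iff.mp hv c hsum j (Finset.mem_erase.mpr ⟨hji, hj⟩)

theorem exists_eq_mul_of_linearIndepOn_erase [DivisionRing R] [Module R M] {a b : ι → R}
    (hv : LinearIndepOn R v (s.erase i)) (ha : ∑ j ∈ s, a j • v j = 0)
    (ha₀ : ∃ j ∈ s, a j ≠ 0) (hb : ∑ j ∈ s, b j • v j = 0) :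
    ∃ t : R, ∀ j ∈ s, b j = t * a j := by
  have hai : a i ≠ 0 := by
    intro h
    obtain ⟨j, hj, haj⟩ := ha₀
    exact haj (eq_zero_of_linearIndepOn_erase hv ha h j hj)
  refine ⟨b i / a i, fun j hj ↦ sub_eq_zero.mp ?_⟩
  have hsum : ∑ l ∈ s, (b l - b i / a i * a l) • v l = 0 := by
    simp only [sub_smul, mul_smul, Finset.sum_sub_distrib, ← Finset.smul_sum, ha, hb, smul_zero,
      sub_zero]
  exact eq_zero_of_linearIndepOn_erase hv hsum (by rw [div_mul_cancel₀ _ hai, sub_self]) j hj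

end Relations

theorem statement2_general {K M G : Type*} [Field K] [AddCommGroup M] [Module K M]
    [AddCommSemigroup G] [DecidableEq G] {n : G} {A : Finset G} {z : K} {V : G → M}
    (hV : ∀ k, ∃ i, LinearIndepOn K (fun j ↦ V (k + j)) (A.erase i))
    {β : G → K} (hβ₀ : ∀ k, β k ≠ 0) (hβ : ∀ k, β (k + n) = z * β k) {a a' : G → G → K}
    (hper : ∀ k, ∀ j ∈ A, a (k + n) j = a k j) (hper' : ∀ k, ∀ j ∈ A, a' (k + n) j = a' k j)
    (ha₀ : ∀ k, ∃ j ∈ A, a k j ≠ 0) (ha'₀ : ∀ k, ∃ j ∈ A, a' k j ≠ 0)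
    (ha : ∀ k, ∑ j ∈ A, a k j • V (k + j) = 0)
    (ha' : ∀ k, ∑ j ∈ A, (a' k j * β (k + j)) • V (k + j) = 0) :
    ∃ α : G → K, (∀ k, α k ≠ 0) ∧ (∀ k, ∀ j ∈ A, a' k j * β (k + j) = α k * a k j) ∧
      (∀ k, α (k + n) = z * α k) := by
  have hproportional : ∀ k, ∃ t : K, ∀ j ∈ A, a' k j * β (k + j) = t * a k j := fun k ↦
    let ⟨_, hi⟩ := hV k
    exists_eq_mul_of_linearIndepOn_erase hi (ha k) (ha₀ k) (ha' k)
  choose α hα using hproportional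
  refine ⟨α, fun k hαk ↦ ?_, hα, fun k ↦ ?_⟩
  · obtain ⟨j, hj, ha'j⟩ := ha'₀ k
    refine mul_ne_zero ha'j (hβ₀ (k + j)) ?_
    rw [hα k j hj, hαk, zero_mul]
  · obtain ⟨j, hj, haj⟩ := ha₀ k
    apply mul_right_cancel₀ haj
    calc
      α (k + n) * a k j = a' (k + n) j * β (k + n + j) := by rw [hα (k + n) j hj, hper k j hj]
      _ = z * (a' k j * β (k + j)) := by
        rw [hper' k j hj, add_right_comm, hβ, mul_left_comm]
      _ = z * α k * a k j := by rw [hα k j hj, mul_assoc]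


/-- Proposition 2.1 in linear form. The `n`-periodic coefficient families
`a, a'` of the relations `∑_{j∈A} a_k(j) V_{k+j} = 0` and
`∑_{j∈A} a'_k(j) β_{k+j} V_{k+j} = 0` differ by a nowhere-vanishing scalar sequence `α`
that is quasi-periodic with the same monodromy `z` as `β`. -/
theorem statement2 (d n : ℕ) (hd : 1 ≤ d) (hn : 1 ≤ n) (A : Finset ℤ) (hA : A.card = d + 2)
    (z : ℝ) (hz : z ≠ 0)
    (V : ℤ → Fin (d + 1) → ℝ)
    (hgen : ∀ k : ℤ, ∀ s ⊆ A, s.card = d + 1 →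
      LinearIndependent ℝ (fun j : s => V (k + (j : ℤ))))
    (β : ℤ → ℝ) (hβ0 : ∀ k : ℤ, β k ≠ 0) (hβq : ∀ k : ℤ, β (k + n) = z * β k)
    (a a' : ℤ → ℤ → ℝ)
    (hper : ∀ k : ℤ, ∀ j ∈ A, a (k + n) j = a k j)
    (hper' : ∀ k : ℤ, ∀ j ∈ A, a' (k + n) j = a' k j)
    (hnz : ∀ k : ℤ, ∃ j ∈ A, a k j ≠ 0)
    (hnz' : ∀ k : ℤ, ∃ j ∈ A, a' k j ≠ 0)
    (ha : ∀ k : ℤ, ∑ j ∈ A, a k j • V (k + j) = 0)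
    (ha' : ∀ k : ℤ, ∑ j ∈ A, (a' k j * β (k + j)) • V (k + j) = 0) :
    ∃ α : ℤ → ℝ, (∀ k : ℤ, α k ≠ 0) ∧
      (∀ k : ℤ, ∀ j ∈ A, a' k j * β (k + j) = α k * a k j) ∧
      (∀ k : ℤ, α (k + n) = z * α k) := by
  refine statement2_general (fun k ↦ ?_) hβ0 hβq hper hper' hnz hnz' ha ha'
  obtain ⟨i, hi, -⟩ := hnz k
  exact ⟨i, hgen k _ (A.erase_subset i) (by simp [hi, hA])⟩
end

section
/- Let m ≥ 1 and let A_+, A_- ⊂ ℤ be disjoint arithmetic progressions with common difference m, each containing at least two elements; set A := A_+ ∪ A_- and d := |A_+| + |A_-| − 2. Let V : ℤ → ℝ^{d+1} be a sequence such that for every k ∈ ℤ, the family (V_{k+l})_{l ∈ A_+ + A_-}, indexed by the (d+1)-element Minkowski sum A_+ + A_-, is linearly independent. Suppose a : ℤ → (A → ℝ) satisfies ∑_{j∈A} a_k(j) • V_{k+j} = 0 for all k ∈ ℤ. Define W : ℤ → ℝ^{d+1} by W_k := ∑_{j∈A_+} a_k(j) • V_{k+j}, and suppose ã : ℤ → (A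 → ℝ) satisfies ∑_{j∈A} ã_k(j) • W_{k+j} = 0 for all k ∈ ℤ. Then for every k ∈ ℤ and every l ∈ ℤ, ∑_{i∈A_+, j∈A_-, i+j=l} ã_k(i)·a_{k+i}(j) = ∑_{i∈A_-, j∈A_+, i+j=l} ã_k(i)·a_{k+i}(j). -/
open scoped Pointwise

/-- A finite set `A ⊆ ℤ` is an arithmetic progression with common difference `m`
if `A = {a + i·m : 0 ≤ i ≤ s}` for some `a ∈ ℤ` and integer `s ≥ 0`. -/
def IsAPWith (m : ℤ) (A : Finset ℤ) : Prop :=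
  ∃ a : ℤ, ∃ s : ℕ, A = (Finset.range (s + 1)).image (fun i : ℕ => a + (i : ℤ) * m)

/-!
Write `𝒟₊, 𝒟₋` for the halves of the operator with coefficients `a`, and `𝒟̃₊, 𝒟̃₋` for those of
the operator with coefficients `ã`. Since `(𝒟₊ + 𝒟₋) V = 0` and `(𝒟̃₊ + 𝒟̃₋) 𝒟₊ V = 0`, both
`𝒟̃₊ 𝒟₋ V` and `𝒟̃₋ 𝒟₊ V` are the negative of `𝒟̃₊ 𝒟₊ V`, so they agree. Both composites are
supported on `A₊ + A₋`, and linear independence of the vectors `V (k + l)`, `l ∈ A₊ + A₋`, turns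
the equality of their values at `k` into equality of their coefficients.
-/

section DifferenceOperators

variable {G R M : Type*} [AddCommSemigroup G] [Semiring R] [AddCommMonoid M] [Module R M]

/-- The difference operator `∑_{j ∈ A} a^j T^j` with support `A` acting on sequences `G → M`,
where `T` is the shift and the coefficient `a^j` is the sequence `k ↦ a k j`. Values of `a k` off
`A` are ignored. -/
def differenceOp (A : Finset G) (a : G → G → R) : (G → M) →+ (G → M) where
  toFun V k := ∑ j ∈ A, a k j • V (k + j)
  map_zero' := by ext k; simp
  map_add' V W := by ext k; simp [Finset.sum_add_distrib]

theorem differenceOp_apply (A : Finset G) (a : G → G → R) (V : G → M) (k : G) :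
    differenceOp A a V k = ∑ j ∈ A, a k j • V (k + j) :=
  rfl

variable [DecidableEq G]

theorem differenceOp_union {A B : Finset G} (hAB : Disjoint A B) (a : G → G → R) (V : G → M) :
    differenceOp (A ∪ B) a V = differenceOp A a V + differenceOp B a V :=
  funext fun _ => Finset.sum_union hAB

/-- The coefficient of `T^l` at position `k` in the composite
`(∑_{i ∈ A} b^i T^i) (∑_{j ∈ B} a^j T^j)`; the coefficient `a` is evaluated at `k + i` because
`T^i` shifts it when moved past it. -/
def compCoeff (A B : Finset G) (b a : G → G → R) (k l : G) : R :=
  ∑ i ∈ A, ∑ j ∈ B, if i + j = l then b k i * a (k + i) j else 0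

theorem compCoeff_eq_zero_of_notMem_add {A B : Finset G} {l : G} (hl : l ∉ A + B)
    (b a : G → G → R) (k : G) : compCoeff A B b a k l = 0 :=
  Finset.sum_eq_zero fun i hi => Finset.sum_eq_zero fun j hj =>
    if_neg fun hij : i + j = l => hl (hij ▸ Finset.add_mem_add hi hj)

theorem differenceOp_comp (A B : Finset G) (b a : G → G → R) (V : G → M) :
    differenceOp A b (differenceOp B a V) = differenceOp (A + B) (compCoeff A B b a) V := by
  ext k
  symm
  calc differenceOp (A + B) (compCoeff A B b a) V k
    _ = ∑ i ∈ A, ∑ j ∈ B, ∑ l ∈ A + B,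
          if i + j = l then (b k i * a (k + i) j) • V (k + l) else 0 := by
      simp only [differenceOp_apply, compCoeff, Finset.sum_smul, ite_smul, zero_smul]
      rw [Finset.sum_comm]
      exact Finset.sum_congr rfl fun i _ => Finset.sum_comm
    _ = ∑ i ∈ A, ∑ j ∈ B, (b k i * a (k + i) j) • V (k + (i + j)) :=
      Finset.sum_congr rfl fun i hi => Finset.sum_congr rfl fun j hj => by
        rw [Finset.sum_ite_eq, if_pos (Finset.add_mem_add hi hj)]
    _ = differenceOp A b (differenceOp B a V) k := by
      simp only [differenceOp_apply, Finset.smul_sum, mul_smul, add_assoc]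

theorem differenceOp_differenceOp_comm_of_union_eq_zero {A B : Finset G} (hAB : Disjoint A B)
    {a b : G → G → R} {V : G → M} {k : G} (ha : differenceOp (A ∪ B) a V = 0)
    (hb : differenceOp (A ∪ B) b (differenceOp A a V) k = 0) :
    differenceOp A b (differenceOp B a V) k = differenceOp B b (differenceOp A a V) k := by
  have ha' : differenceOp A b (differenceOp B a V) + differenceOp A b (differenceOp A a V) = 0 := by
    rw [← map_add, add_comm, ← differenceOp_union hAB, ha, map_zero]
  rw [differenceOp_union hAB] at hb
  exact left_neg_eq_right_neg (congrFun ha' k) hb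

theorem statement4_general {A B : Finset G} (hAB : Disjoint A B) {a b : G → G → R} {V : G → M}
    {k : G} (hV : LinearIndepOn R (fun l => V (k + l)) (A + B : Finset G))
    (ha : differenceOp (A ∪ B) a V = 0)
    (hb : differenceOp (A ∪ B) b (differenceOp A a V) k = 0) (l : G) :
    compCoeff A B b a k l = compCoeff B A b a k l := by
  by_cases hl : l ∈ A + B
  · have h := differenceOp_differenceOp_comm_of_union_eq_zero hAB ha hb
    rw [differenceOp_comp, differenceOp_comp, add_comm B A] at h
    exact linearIndepOn_finset_iffₛ.mp hV _ _ h l hl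
  · rw [compCoeff_eq_zero_of_notMem_add hl,
      compCoeff_eq_zero_of_notMem_add (add_comm A B ▸ hl)]

end DifferenceOperators

/-- Theorem 2.2, the operator identity `𝒟̃₊𝒟₋ = 𝒟̃₋𝒟₊` coefficient by
coefficient. Here `a` encodes the relation `∑_{j∈A} a_k(j) V_{k+j} = 0` of the original
polygon, `W_k = ∑_{j∈A₊} a_k(j) V_{k+j}` are lifted vertices of the image polygon, and
`ã` encodes the relation for `W`. -/
theorem statement4 (m : ℤ) (hm : 1 ≤ m) (Ap Am : Finset ℤ)
    (hAPp : IsAPWith m Ap) (hAPm : IsAPWith m Am) (hdisj : Disjoint Ap Am)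
    (h2p : 2 ≤ Ap.card) (h2m : 2 ≤ Am.card)
    (d : ℕ) (hd : d = Ap.card + Am.card - 2)
    (V : ℤ → Fin (d + 1) → ℝ)
    (hgen : ∀ k : ℤ, LinearIndependent ℝ (fun l : (Ap + Am : Finset ℤ) => V (k + (l : ℤ))))
    (a : ℤ → ℤ → ℝ)
    (ha : ∀ k : ℤ, ∑ j ∈ Ap ∪ Am, a k j • V (k + j) = 0)
    (W : ℤ → Fin (d + 1) → ℝ)
    (hW : ∀ k : ℤ, W k = ∑ j ∈ Ap, a k j • V (k + j))
    (ta : ℤ → ℤ → ℝ)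
    (hta : ∀ k : ℤ, ∑ j ∈ Ap ∪ Am, ta k j • W (k + j) = 0) :
    ∀ k l : ℤ,
      (∑ i ∈ Ap, ∑ j ∈ Am, if i + j = l then ta k i * a (k + i) j else 0) =
      (∑ i ∈ Am, ∑ j ∈ Ap, if i + j = l then ta k i * a (k + i) j else 0) := by
  obtain rfl : W = differenceOp Ap a V := funext hW
  exact fun k => statement4_general hdisj (hgen k) (funext ha) (hta k)
end

section
/- Let m ≥ 1 and let A_+, A_- ⊂ ℤ be disjoint arithmetic progressions with common difference m, each containing at least two elements. Define B_+ := {min A_+ − i·m : 0 ≤ i ≤ |A_-| − 2} and B_- := {min A_- − i·m : 0 ≤ i ≤ |A_+| − 2}. Then B_+ and B_- are nonempty disjoint arithmetic progressions with common difference m which are non-consecutive, i.e. max B_+ + m ≠ min B_- and max B_- + m ≠ min B_+. -/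
/-!
Two progressions with common difference `m`, least elements `a` and `b`, and `s + 1` and `t + 1`
terms are disjoint if and only if `b - a` is not `n • m` for any integer `n ∈ [-t, s]`. Passing
from `A₊, A₋` to `B₊, B₋` shrinks this interval by one at both ends, and the two lost values of `n`
are exactly the ones for which `B₊` and `B₋` would be consecutive.
-/

section AddCommGroup

variable {G : Type*} [AddCommGroup G] [DecidableEq G]

/-- The arithmetic progression `{a + i • m : 0 ≤ i ≤ s}`, which has `s + 1` terms: it is never
empty, and `s` counts the steps. -/
def arithProg (a m : G) (s : ℕ) : Finset G :=
  (Finset.range (s + 1)).image fun i : ℕ ↦ a + i • m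

/-- The finite set `A` is an arithmetic progression with common difference `m`: the notion of
`IsAPWith` in an arbitrary abelian group. -/
def IsArithProg (m : G) (A : Finset G) : Prop :=
  ∃ a : G, ∃ s : ℕ, A = arithProg a m s

theorem mem_arithProg {a m x : G} {s : ℕ} :
    x ∈ arithProg a m s ↔ ∃ i ≤ s, a + i • m = x := by
  simp only [arithProg, Finset.mem_image, Finset.mem_range, Nat.lt_succ_iff]

theorem arithProg_nonempty (a m : G) (s : ℕ) : (arithProg a m s).Nonempty :=
  Finset.nonempty_range_add_one.image _

theorem IsArithProg.exists_eq_arithProg_succ {m : G} {A : Finset G} (hA : IsArithProg m A)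
    (hcard : 2 ≤ A.card) : ∃ a : G, ∃ s : ℕ, A = arithProg a m (s + 1) := by
  obtain ⟨a, _ | s, rfl⟩ := hA
  · simp [arithProg] at hcard
  · exact ⟨a, s, rfl⟩

theorem image_sub_nsmul_eq_arithProg (a m : G) (s : ℕ) :
    (Finset.range (s + 1)).image (fun i : ℕ ↦ a - i • m) = arithProg (a - s • m) m s := by
  rw [arithProg, ← Finset.range_image_pred_top_sub (s + 1), Finset.image_image,
    Finset.range_image_pred_top_sub]
  refine Finset.image_congr fun i hi ↦ ?_
  have hi : i ≤ s := Nat.lt_succ_iff.mp (Finset.mem_range.mp hi)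
  simp only [Function.comp_apply, add_tsub_cancel_right, sub_nsmul m hi]
  abel

theorem disjoint_arithProg_iff {a b m : G} {s t : ℕ} :
    Disjoint (arithProg a m s) (arithProg b m t) ↔
      ∀ n : ℤ, -t ≤ n → n ≤ s → b - a ≠ n • m := by
  have sub_eq_iff (i j : ℕ) : b - a = ((i : ℤ) - j) • m ↔ b + j • m = a + i • m := by
    rw [sub_zsmul, natCast_zsmul, natCast_zsmul, ← sub_eq_add_neg, sub_eq_sub_iff_add_eq_add,
      add_comm (i • m)]
  simp only [Finset.disjoint_left, mem_arithProg]
  constructor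
  · intro hdisj n hn_ge hn_le hn
    obtain ⟨i, j, hi, hj, rfl⟩ : ∃ i j : ℕ, i ≤ s ∧ j ≤ t ∧ n = i - j :=
      ⟨n.toNat, (-n).toNat, by omega, by omega, by omega⟩
    exact hdisj ⟨i, hi, rfl⟩ ⟨j, hj, (sub_eq_iff i j).mp hn⟩
  · rintro hdiff _ ⟨i, hi, rfl⟩ ⟨j, hj, hij⟩
    exact hdiff (i - j) (by omega) (by omega) ((sub_eq_iff i j).mpr hij)

theorem disjoint_arithProg_succ_iff {a b m : G} {s t : ℕ} :
    Disjoint (arithProg a m (s + 1)) (arithProg b m (t + 1)) ↔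
      Disjoint (arithProg (a - t • m) m t) (arithProg (b - s • m) m s) ∧
        a + m ≠ b - s • m ∧ b + m ≠ a - t • m := by
  have shift (n : ℤ) : b - s • m - (a - t • m) = n • m ↔ b - a = (n + s - t) • m := by
    rw [sub_zsmul, add_zsmul, natCast_zsmul, natCast_zsmul, ← sub_eq_zero,
      ← sub_eq_zero (a := b - a)]
    congr! 1
    abel
  have upper : a + m = b - s • m ↔ b - a = ((s : ℤ) + 1) • m := by
    rw [add_zsmul, natCast_zsmul, one_zsmul, eq_sub_iff_add_eq, sub_eq_iff_eq_add', eq_comm,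
      add_assoc, add_comm m]
  have lower : b + m = a - t • m ↔ b - a = (-((t : ℤ) + 1)) • m := by
    rw [neg_zsmul, add_zsmul, natCast_zsmul, one_zsmul, eq_sub_iff_add_eq, sub_eq_iff_eq_add',
      ← sub_eq_add_neg, eq_sub_iff_add_eq, add_assoc, add_comm m]
  simp only [disjoint_arithProg_iff, ne_eq, shift, upper, lower, Nat.cast_add, Nat.cast_one]
  constructor
  · intro h
    exact ⟨fun n _ _ ↦ h _ (by omega) (by omega), h _ (by omega) le_rfl, h _ le_rfl (by omega)⟩
  · rintro ⟨hmid, hupper, hlower⟩ n hn_ge hn_le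
    obtain rfl | rfl | ⟨hlt, hgt⟩ : n = s + 1 ∨ n = -(t + 1) ∨ n ≤ s ∧ -t ≤ n := by omega
    · exact hupper
    · exact hlower
    · convert hmid (n - s + t) (by omega) (by omega) using 3
      abel

theorem card_arithProg (a : G) {m : G} (hm : ¬IsOfFinAddOrder m) (s : ℕ) :
    (arithProg a m s).card = s + 1 := by
  rw [arithProg, Finset.card_image_of_injective, Finset.card_range]
  exact (add_right_injective a).comp (injective_nsmul_iff_not_isOfFinAddOrder.mpr hm)

end AddCommGroup

section LinearOrder

variable {G : Type*} [AddCommGroup G] [LinearOrder G] [IsOrderedAddMonoid G]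

theorem min'_arithProg (a : G) {m : G} (hm : 0 ≤ m) (s : ℕ) (h : (arithProg a m s).Nonempty) :
    (arithProg a m s).min' h = a := by
  refine (Finset.min'_eq_iff _ h a).mpr ⟨mem_arithProg.mpr ⟨0, by simp⟩, fun x hx ↦ ?_⟩
  obtain ⟨i, -, rfl⟩ := mem_arithProg.mp hx
  exact le_add_of_nonneg_right (nsmul_nonneg hm i)

theorem max'_arithProg (a : G) {m : G} (hm : 0 ≤ m) (s : ℕ) (h : (arithProg a m s).Nonempty) :
    (arithProg a m s).max' h = a + s • m := by
  refine (Finset.max'_eq_iff _ h _).mpr ⟨mem_arithProg.mpr ⟨s, le_rfl, rfl⟩, fun x hx ↦ ?_⟩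
  obtain ⟨i, hi, rfl⟩ := mem_arithProg.mp hx
  gcongr

theorem statement5_general (m : G) (hm : 0 < m) (Ap Am : Finset G)
    (hAPp : IsArithProg m Ap) (hAPm : IsArithProg m Am) (hdisj : Disjoint Ap Am)
    (h2p : 2 ≤ Ap.card) (h2m : 2 ≤ Am.card)
    (Bp Bm : Finset G)
    (hBp : Bp = (Finset.range (Am.card - 1)).image
      (fun i : ℕ ↦ Ap.min' (Finset.card_pos.mp (by omega)) - i • m))
    (hBm : Bm = (Finset.range (Ap.card - 1)).image
      (fun i : ℕ ↦ Am.min' (Finset.card_pos.mp (by omega)) - i • m)) :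
    ∃ (h₁ : Bp.Nonempty) (h₂ : Bm.Nonempty),
      Disjoint Bp Bm ∧ IsArithProg m Bp ∧ IsArithProg m Bm ∧
      Bp.max' h₁ + m ≠ Bm.min' h₂ ∧ Bm.max' h₂ + m ≠ Bp.min' h₁ := by
  obtain ⟨a, s, rfl⟩ := hAPp.exists_eq_arithProg_succ h2p
  obtain ⟨b, t, rfl⟩ := hAPm.exists_eq_arithProg_succ h2m
  have hm_order : ¬IsOfFinAddOrder m := not_isOfFinAddOrder_of_isAddTorsionFree hm.ne'
  obtain rfl : Bp = arithProg (a - t • m) m t := by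
    rw [hBp, card_arithProg b hm_order, min'_arithProg a hm.le, Nat.add_sub_cancel,
      image_sub_nsmul_eq_arithProg]
  obtain rfl : Bm = arithProg (b - s • m) m s := by
    rw [hBm, card_arithProg a hm_order, min'_arithProg b hm.le, Nat.add_sub_cancel,
      image_sub_nsmul_eq_arithProg]
  obtain ⟨hdisjB, hpm, hmp⟩ := disjoint_arithProg_succ_iff.mp hdisj
  refine ⟨arithProg_nonempty _ _ _, arithProg_nonempty _ _ _, hdisjB, ⟨_, _, rfl⟩, ⟨_, _, rfl⟩,
    ?_, ?_⟩
  · rwa [max'_arithProg _ hm.le, min'_arithProg _ hm.le, sub_add_cancel]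
  · rwa [max'_arithProg _ hm.le, min'_arithProg _ hm.le, sub_add_cancel]

end LinearOrder

/-- Well-definedness of the map φ of Proposition 3.1. From disjoint
arithmetic progressions `A₊, A₋` with common difference `m`, each with at least two
elements, the sets `B₊ = {min A₊ − i·m : 0 ≤ i ≤ |A₋|−2}` and
`B₋ = {min A₋ − i·m : 0 ≤ i ≤ |A₊|−2}` are nonempty disjoint arithmetic progressions
with common difference `m` which are non-consecutive. -/
theorem statement5 (m : ℤ) (hm : 1 ≤ m) (Ap Am : Finset ℤ)
    (hAPp : IsAPWith m Ap) (hAPm : IsAPWith m Am) (hdisj : Disjoint Ap Am)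
    (h2p : 2 ≤ Ap.card) (h2m : 2 ≤ Am.card)
    (Bp Bm : Finset ℤ)
    (hBp : Bp = (Finset.range (Am.card - 1)).image
      (fun i : ℕ => Ap.min' (Finset.card_pos.mp (by omega)) - (i : ℤ) * m))
    (hBm : Bm = (Finset.range (Ap.card - 1)).image
      (fun i : ℕ => Am.min' (Finset.card_pos.mp (by omega)) - (i : ℤ) * m)) :
    ∃ (h₁ : Bp.Nonempty) (h₂ : Bm.Nonempty),
      Disjoint Bp Bm ∧ IsAPWith m Bp ∧ IsAPWith m Bm ∧
      Bp.max' h₁ + m ≠ Bm.min' h₂ ∧ Bm.max' h₂ + m ≠ Bp.min' h₁ :=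
  statement5_general m (zero_lt_one.trans_le hm) Ap Am hAPp hAPm hdisj h2p h2m Bp Bm hBp hBm
end

section
/- Let m ≥ 1 and let B_+, B_- ⊂ ℤ be nonempty disjoint arithmetic progressions with common difference m satisfying max B_+ + m ≠ min B_- and max B_- + m ≠ min B_+. Define A_+ := {max B_+ + i·m : 0 ≤ i ≤ |B_-|} and A_- := {max B_- + i·m : 0 ≤ i ≤ |B_+|}. Then A_+ and A_- are disjoint arithmetic progressions with common difference m, each containing at least two elements, and moreover B_+ = {min A_+ − i·m : 0 ≤ i ≤ |A_-| − 2} and B_- = {min A_- − i·m : 0 ≤ i ≤ |A_+| − 2}. -/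
/-!
The progressions `A₊` and `A₋` start at the last terms of `B₊` and `B₋`. Two progressions with the
same difference meet only if one of them contains the first term of the other, so a common point of
`A₊` and `A₋` makes, say, the last term of `B₊` equal to the last term of `B₋` plus `j • m` with
`j ≤ |B₊|`. Going back `j` steps from the last term of `B₊` either stays inside `B₊`, and then `B₊`
and `B₋` meet, or (`j = |B₊|`) it shows that `B₊` starts right after `B₋` ends.
-/

variable {G : Type*}

/-- The `n`-term arithmetic progression `{a, a + d, …, a + (n - 1) • d}`; the length counts terms,
so that `n = 0` gives the empty set. -/
def arithProgression [AddMonoid G] [DecidableEq G] (a d : G) (n : ℕ) : Finset G :=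
  (Finset.range n).image fun i ↦ a + i • d

/-- `A` is a nonempty arithmetic progression with common difference `d`: the notion `IsAPWith` with
`ℤ` replaced by an additive monoid. -/
def IsArithProgression [AddMonoid G] [DecidableEq G] (d : G) (A : Finset G) : Prop :=
  ∃ a, ∃ s : ℕ, A = arithProgression a d (s + 1)

section Monoid

variable [AddMonoid G] [DecidableEq G] {a b d x : G} {n p q s t : ℕ}

theorem mem_arithProgression : x ∈ arithProgression a d n ↔ ∃ i < n, a + i • d = x := by
  simp [arithProgression]

theorem add_nsmul_mem_arithProgression {i : ℕ} (hi : i < n) :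
    a + i • d ∈ arithProgression a d n :=
  mem_arithProgression.2 ⟨i, hi, rfl⟩

theorem left_mem_arithProgression (hn : 0 < n) : a ∈ arithProgression a d n :=
  mem_arithProgression.2 ⟨0, hn, by simp⟩

theorem arithProgression_nonempty : (arithProgression a d n).Nonempty ↔ n ≠ 0 := by
  simp [arithProgression]

variable [IsRightCancelAdd G]

theorem mem_arithProgression_of_add_nsmul_eq {i j : ℕ} (hij : i ≤ j) (hj : j < n)
    (h : a + i • d = b + j • d) : a ∈ arithProgression b d n := by
  refine mem_arithProgression.2 ⟨j - i, by lia, add_right_cancel (b := i • d) ?_⟩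
  rw [add_assoc, ← add_nsmul, Nat.sub_add_cancel hij, h]

theorem disjoint_arithProgression_of_notMem (ha : a ∉ arithProgression b d q)
    (hb : b ∉ arithProgression a d p) :
    Disjoint (arithProgression a d p) (arithProgression b d q) := by
  simp only [Finset.disjoint_left, mem_arithProgression]
  rintro _ ⟨i, hi, rfl⟩ ⟨j, hj, hji⟩
  rcases le_total i j with hij | hij
  · exact ha (mem_arithProgression_of_add_nsmul_eq hij hj hji.symm)
  · exact hb (mem_arithProgression_of_add_nsmul_eq hij hi hji)

theorem last_notMem_arithProgression_last
    (hdisj : Disjoint (arithProgression a d (s + 1)) (arithProgression b d (t + 1)))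
    (hne : b + (t + 1) • d ≠ a) :
    a + s • d ∉ arithProgression (b + t • d) d (s + 2) := by
  rw [mem_arithProgression]
  rintro ⟨j, hj, h⟩
  obtain hjs | rfl : j ≤ s ∨ j = s + 1 := by lia
  · have hmeet : b + t • d ∈ arithProgression a d (s + 1) :=
      mem_arithProgression_of_add_nsmul_eq hjs s.lt_succ_self h
    exact Finset.disjoint_left.1 hdisj hmeet (add_nsmul_mem_arithProgression t.lt_succ_self)
  · refine hne (add_right_cancel (b := s • d) ?_)
    rw [← h, add_assoc, add_assoc, ← add_nsmul, ← add_nsmul]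
    congr 2
    lia

theorem disjoint_arithProgression_last
    (hdisj : Disjoint (arithProgression a d (s + 1)) (arithProgression b d (t + 1)))
    (hab : a + (s + 1) • d ≠ b) (hba : b + (t + 1) • d ≠ a) :
    Disjoint (arithProgression (a + s • d) d (t + 2)) (arithProgression (b + t • d) d (s + 2)) :=
  disjoint_arithProgression_of_notMem (last_notMem_arithProgression_last hdisj hba)
    (last_notMem_arithProgression_last hdisj.symm hab)

end Monoid

theorem arithProgression_last_neg [AddGroup G] [DecidableEq G] (a d : G) (s : ℕ) :
    arithProgression (a + s • d) (-d) (s + 1) = arithProgression a d (s + 1) := by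
  have term_reflect {i : ℕ} (hi : i ≤ s) : a + (s - i) • d = a + s • d + i • -d := by
    rw [add_assoc, neg_nsmul, sub_nsmul d hi]
  ext x
  simp only [mem_arithProgression, Nat.lt_succ_iff]
  constructor
  · rintro ⟨i, hi, rfl⟩
    exact ⟨s - i, s.sub_le i, term_reflect hi⟩
  · rintro ⟨i, hi, rfl⟩
    exact ⟨s - i, s.sub_le i, by rw [← term_reflect (s.sub_le i), Nat.sub_sub_self hi]⟩

theorem card_arithProgression [AddCommMonoid G] [LinearOrder G] [IsOrderedCancelAddMonoid G]
    {d : G} (hd : 0 < d) (a : G) (n : ℕ) : (arithProgression a d n).card = n := by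
  rw [arithProgression, Finset.card_image_of_injective, Finset.card_range]
  exact (add_right_injective a).comp (nsmul_left_strictMono hd).injective

section OrderedMonoid

variable [AddCommMonoid G] [LinearOrder G] [IsOrderedAddMonoid G] {d : G}

theorem min'_arithProgression (hd : 0 ≤ d) (a : G) {n : ℕ}
    (h : (arithProgression a d n).Nonempty) : (arithProgression a d n).min' h = a := by
  have hn : 0 < n := Nat.pos_of_ne_zero (arithProgression_nonempty.1 h)
  refine (Finset.min'_eq_iff _ h a).2 ⟨left_mem_arithProgression hn, fun x hx ↦ ?_⟩
  obtain ⟨i, -, rfl⟩ := mem_arithProgression.1 hx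
  exact le_add_of_nonneg_right (nsmul_nonneg hd i)

theorem max'_arithProgression (hd : 0 ≤ d) (a : G) {s : ℕ}
    (h : (arithProgression a d (s + 1)).Nonempty) :
    (arithProgression a d (s + 1)).max' h = a + s • d := by
  refine (Finset.max'_eq_iff _ h _).2
    ⟨add_nsmul_mem_arithProgression s.lt_succ_self, fun x hx ↦ ?_⟩
  obtain ⟨i, hi, rfl⟩ := mem_arithProgression.1 hx
  gcongr
  exact Nat.le_of_lt_succ hi

end OrderedMonoid

theorem image_add_mul_eq_arithProgression (a m : ℤ) (n : ℕ) :
    (Finset.range n).image (fun i : ℕ ↦ a + (i : ℤ) * m) = arithProgression a m n := by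
  simp [arithProgression]

theorem image_sub_mul_eq_arithProgression (a m : ℤ) (n : ℕ) :
    (Finset.range n).image (fun i : ℕ ↦ a - (i : ℤ) * m) = arithProgression a (-m) n := by
  simp [arithProgression, sub_eq_add_neg]

theorem isAPWith_iff_isArithProgression {m : ℤ} {A : Finset ℤ} :
    IsAPWith m A ↔ IsArithProgression m A := by
  simp only [IsAPWith, IsArithProgression, image_add_mul_eq_arithProgression]

theorem statement7_general [AddCommGroup G] [LinearOrder G] [IsOrderedAddMonoid G] {d : G}
    (hd : 0 < d) {P Q : Finset G} (hP : P.Nonempty) (hQ : Q.Nonempty) (hPQ : Disjoint P Q)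
    (hPd : IsArithProgression d P) (hQd : IsArithProgression d Q)
    (hncP : P.max' hP + d ≠ Q.min' hQ) (hncQ : Q.max' hQ + d ≠ P.min' hP) {A C : Finset G}
    (hA : A = arithProgression (P.max' hP) d (Q.card + 1))
    (hC : C = arithProgression (Q.max' hQ) d (P.card + 1)) :
    Disjoint A C ∧ IsArithProgression d A ∧ IsArithProgression d C ∧ 2 ≤ A.card ∧ 2 ≤ C.card ∧
      ∃ (hA' : A.Nonempty) (hC' : C.Nonempty),
        P = arithProgression (A.min' hA') (-d) (C.card - 1) ∧
        Q = arithProgression (C.min' hC') (-d) (A.card - 1) := by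
  obtain ⟨a, s, rfl⟩ := hPd
  obtain ⟨b, t, rfl⟩ := hQd
  simp only [max'_arithProgression hd.le, min'_arithProgression hd.le,
    card_arithProgression hd] at hncP hncQ hA hC
  rw [add_assoc, ← succ_nsmul] at hncP hncQ
  subst hA hC
  refine ⟨disjoint_arithProgression_last hPQ hncP hncQ, ⟨_, _, rfl⟩, ⟨_, _, rfl⟩, ?_, ?_,
    arithProgression_nonempty.2 (by lia), arithProgression_nonempty.2 (by lia), ?_, ?_⟩
  · simp [card_arithProgression hd]
  · simp [card_arithProgression hd]
  · rw [min'_arithProgression hd.le, card_arithProgression hd, Nat.add_sub_cancel,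
      arithProgression_last_neg]
  · rw [min'_arithProgression hd.le, card_arithProgression hd, Nat.add_sub_cancel,
      arithProgression_last_neg]

/-- Surjectivity of the map φ of Proposition 3.1. From nonempty disjoint
non-consecutive arithmetic progressions `B₊, B₋` with common difference `m`, the sets
`A₊ = {max B₊ + i·m : 0 ≤ i ≤ |B₋|}` and `A₋ = {max B₋ + i·m : 0 ≤ i ≤ |B₊|}` are
disjoint arithmetic progressions with common difference `m`, each with at least two
elements, and `B₊ = {min A₊ − i·m : 0 ≤ i ≤ |A₋|−2}`,
`B₋ = {min A₋ − i·m : 0 ≤ i ≤ |A₊|−2}`. -/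
theorem statement7 (m : ℤ) (hm : 1 ≤ m) (Bp Bm : Finset ℤ)
    (hne₁ : Bp.Nonempty) (hne₂ : Bm.Nonempty) (hdisjB : Disjoint Bp Bm)
    (hBPp : IsAPWith m Bp) (hBPm : IsAPWith m Bm)
    (hnc₁ : Bp.max' hne₁ + m ≠ Bm.min' hne₂) (hnc₂ : Bm.max' hne₂ + m ≠ Bp.min' hne₁)
    (Ap Am : Finset ℤ)
    (hAp : Ap = (Finset.range (Bm.card + 1)).image (fun i : ℕ => Bp.max' hne₁ + (i : ℤ) * m))
    (hAm : Am = (Finset.range (Bp.card + 1)).image (fun i : ℕ => Bm.max' hne₂ + (i : ℤ) * m)) :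
    Disjoint Ap Am ∧ IsAPWith m Ap ∧ IsAPWith m Am ∧ 2 ≤ Ap.card ∧ 2 ≤ Am.card ∧
      ∃ (h₁ : Ap.Nonempty) (h₂ : Am.Nonempty),
        Bp = (Finset.range (Am.card - 1)).image (fun i : ℕ => Ap.min' h₁ - (i : ℤ) * m) ∧
        Bm = (Finset.range (Ap.card - 1)).image (fun i : ℕ => Am.min' h₂ - (i : ℤ) * m) := by
  simp only [isAPWith_iff_isArithProgression, image_add_mul_eq_arithProgression,
    image_sub_mul_eq_arithProgression] at hBPp hBPm hAp hAm ⊢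
  exact statement7_general (by lia) hne₁ hne₂ hdisjB hBPp hBPm hnc₁ hnc₂ hAp hAm
end

section
/- Let m ≥ 1, d ≥ 1, and let B ⊂ ℤ be a nonempty arithmetic progression with common difference m satisfying |B| ≤ d. Let V : ℤ → ℝ^{d+1} be in general position, i.e. for every finite set S ⊆ ℤ with |S| ≤ d+1 the family (V_i)_{i∈S} is linearly independent. Then for every k ∈ ℤ, ⋂_{j∈B} span_ℝ {V_{k+j+i·m} : 0 ≤ i ≤ d−1} = span_ℝ {V_{k+c} : c ∈ C}, where C := {max B + i·m : 0 ≤ i ≤ d − |B|}. -/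
/-!
Read along a progression of difference `m`, the vertices form a sequence `W : ℕ → M` in which any
`d + 1` consecutive terms are linearly independent, and the `m`-diagonal hyperplanes are the spans
of `d` consecutive terms. The terms spanning all of the hyperplanes together need not be
independent, so the spans cannot be intersected at once; but intersecting with one further
hyperplane involves only the `d + 1` terms of a single window, where the intersection of spans is
the span of the intersection, and each such step removes the first term.
-/

open Set Submodule

section Windows

variable {R M : Type*} [Semiring R] [AddCommMonoid M] [Module R M]

theorem span_image_inter_of_linearIndepOn_union {ι : Type*} {v : ι → M} {s t : Set ι}
    (h : LinearIndepOn R v (s ∪ t)) :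
    span R (v '' (s ∩ t)) = span R (v '' s) ⊓ span R (v '' t) := by
  apply SetLike.coe_injective
  simp only [coe_inf, Finsupp.span_image_eq_map_linearCombination, map_coe,
    Finsupp.supported_inter]
  have h_inj : InjOn (Finsupp.linearCombination R v) (Finsupp.supported R R (s ∪ t)) :=
    linearIndepOn_iffₛ.1 h
  exact h_inj.image_inter (Finsupp.supported_mono subset_union_left)
    (Finsupp.supported_mono subset_union_right)

theorem iInf_span_image_Ico_add {W : ℕ → M} {d : ℕ}
    (hW : ∀ t, LinearIndepOn R W (Ico t (t + (d + 1)))) (s : ℕ) :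
    ⨅ t ∈ Finset.range (s + 1), span R (W '' Ico t (t + d)) = span R (W '' Ico s d) := by
  induction s with
  | zero => simp
  | succ s ih =>
    have h_inter : Ico (s + 1) (s + 1 + d) ∩ Ico s d = Ico (s + 1) d := by
      ext; simp only [mem_inter_iff, mem_Ico]; omega
    have h_union : Ico (s + 1) (s + 1 + d) ∪ Ico s d ⊆ Ico s (s + (d + 1)) := by
      intro; simp only [mem_union, mem_Ico]; omega
    rw [Finset.range_add_one, Finset.iInf_insert, ih,
      ← span_image_inter_of_linearIndepOn_union ((hW s).mono h_union), h_inter]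

end Windows

section Progressions

variable {A : Type*}

theorem add_natCast_mul_injective [Ring A] [NoZeroDivisors A] [CharZero A] {m : A} (hm : m ≠ 0)
    (a : A) : Function.Injective fun i : ℕ => a + (i : A) * m := by
  intro i j hij
  simpa [hm] using hij

theorem max'_image_range_add_natCast_mul [Semiring A] [LinearOrder A] [IsOrderedRing A] {m : A}
    (hm : 0 ≤ m) (a : A) (s : ℕ)
    (hne : ((Finset.range (s + 1)).image fun i : ℕ => a + (i : A) * m).Nonempty) :
    ((Finset.range (s + 1)).image fun i : ℕ => a + (i : A) * m).max' hne = a + s * m := by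
  refine (Finset.max'_eq_iff _ hne _).2
    ⟨Finset.mem_image_of_mem _ (Finset.self_mem_range_succ s), ?_⟩
  rw [Finset.forall_mem_image]
  intro i hi
  have his : i ≤ s := Finset.mem_range_succ_iff.1 hi
  gcongr

theorem image_add_natCast_mul_Ico [Semiring A] (m a : A) (s n : ℕ) :
    (fun i : ℕ => a + (i : A) * m) '' Ico s (s + n) =
      (fun i : ℕ => a + s * m + (i : A) * m) '' Iio n := by
  have h_shift : Ico s (s + n) = (s + ·) '' Iio n := by
    rw [← Ico_bot, Nat.bot_eq_zero, image_const_add_Ico, add_zero]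
  simp only [h_shift, image_image, Nat.cast_add, add_mul, add_assoc]

end Progressions

theorem statement9_general {R M : Type*} [Semiring R] [AddCommMonoid M] [Module R M]
    {m : ℤ} (hm : 1 ≤ m) {d : ℕ} {B : Finset ℤ} (hne : B.Nonempty) (hAP : IsAPWith m B)
    (hcard : B.card ≤ d) {V : ℤ → M}
    (hV : ∀ a, LinearIndepOn R V ((fun i : ℕ => a + (i : ℤ) * m) '' Iio (d + 1))) (k : ℤ) :
    ⨅ j ∈ B, span R (range fun i : Fin d => V (k + j + (i : ℤ) * m)) =
      span R ((fun c => V (k + c)) ''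
        ((Finset.range (d - B.card + 1)).image
          (fun i : ℕ => B.max' hne + (i : ℤ) * m) : Set ℤ)) := by
  obtain ⟨a, s, rfl⟩ := hAP
  have hinj := add_natCast_mul_injective (by omega : m ≠ 0)
  rw [Finset.card_image_of_injective _ (hinj a), Finset.card_range] at hcard ⊢
  rw [max'_image_range_add_natCast_mul (by omega), Finset.iInf_finset_image]
  let W : ℕ → M := fun i => V (k + a + i * m)
  have image_window (t n : ℕ) :
      W '' Ico t (t + n) = V '' ((fun i : ℕ => k + a + t * m + (i : ℤ) * m) '' Iio n) := by
    rw [← image_add_natCast_mul_Ico, image_image]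
  have window_indep (t : ℕ) : LinearIndepOn R W (Ico t (t + (d + 1))) :=
    LinearIndepOn.comp_of_image (by rw [image_add_natCast_mul_Ico]; exact hV _) (hinj (k + a)).injOn
  have diagonal (t : ℕ) :
      range (fun i : Fin d => V (k + (a + t * m) + (i : ℤ) * m)) = W '' Ico t (t + d) := by
    rw [image_window, image_image, ← Fin.range_val, ← range_comp, ← add_assoc]
    rfl
  have tail : (fun c => V (k + c)) '' ((Finset.range (d - (s + 1) + 1)).image
      (fun i : ℕ => a + s * m + (i : ℤ) * m) : Set ℤ) = W '' Ico s d := by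
    have h_length : s + (d - (s + 1) + 1) = d := by omega
    rw [← congrArg (Ico s) h_length, image_window, Finset.coe_image, Finset.coe_range]
    simp only [image_image, add_assoc]
  simp only [diagonal, tail]
  exact iInf_span_image_Ico_add window_indep s

/-- For a sequence `V : ℤ → ℝ^{d+1}` in general position, the intersection
of the `m`-diagonal hyperplanes `span⟨V_{k+j}, V_{k+j+m}, …, V_{k+j+m(d−1)}⟩` over
`j ∈ B` equals the span of the vertices indexed by
`C = {max B + i·m : 0 ≤ i ≤ d − |B|}`. -/
theorem statement9 (m : ℤ) (hm : 1 ≤ m) (d : ℕ) (hd : 1 ≤ d)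
    (B : Finset ℤ) (hne : B.Nonempty) (hAP : IsAPWith m B) (hcard : B.card ≤ d)
    (V : ℤ → Fin (d + 1) → ℝ)
    (hgen : ∀ S : Finset ℤ, S.card ≤ d + 1 → LinearIndependent ℝ (fun i : S => V i)) :
    ∀ k : ℤ,
      (⨅ j ∈ B, Submodule.span ℝ (Set.range fun i : Fin d => V (k + j + (i : ℤ) * m))) =
      Submodule.span ℝ ((fun c => V (k + c)) ''
        ((Finset.range (d - B.card + 1)).image
          (fun i : ℕ => B.max' hne + (i : ℤ) * m) : Set ℤ)) := by
  exact statement9_general hm hne hAP hcard fun a => by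
    rw [← Finset.coe_range, ← Finset.coe_image]
    exact hgen _ (Finset.card_image_le.trans_eq (Finset.card_range _))
end

section
/- Let m ≥ 1 and let A_+, A_- ⊂ ℤ be disjoint arithmetic progressions with common difference m, each containing at least two elements; set d := |A_+| + |A_-| − 2. Define B_+ := {min A_+ − i·m : 0 ≤ i ≤ |A_-| − 2} and B_- := {min A_- − i·m : 0 ≤ i ≤ |A_+| − 2}. Let V : ℤ → ℝ^{d+1} be in general position, i.e. for every finite set S ⊆ ℤ with |S| ≤ d+1 the family (V_i)_{i∈S} is linearly independent. Then for every k ∈ ℤ, ⋂_{j ∈ B_+ ∪ B_-} span_ℝ {V_{k+j+i·m} : 0 ≤ i ≤ d−1} = span_ℝ {V_{k+j} : j ∈ A_+} ⊓ span_ℝ {V_{k+j} : j ∈ A_-}, and this subspace of ℝ^{d+1} is one-dimensional. -/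
/-!
In the index coordinate `i` of `a + i * m`, with `a = min A`, the hyperplanes attached to one
progression `A` are spans of windows of `d` consecutive vectors. Spans of subfamilies of an
independent family intersect in the span of the common part. So, starting from `d + 1` consecutive
vectors, which span the whole space, intersecting with each successive window cuts off exactly one
vector, and after `d + 1 - |A|` windows exactly the vectors indexed by `A` are left. The
intersection for `A₊` and `A₋` has dimension `|A₊| + |A₋| - (d + 1) = 1` by Grassmann's formula,
since `A₊ ∪ A₋` has `d + 2` elements and hence indexes a spanning family.
-/

open Module Submodule

theorem span_image_inf_span_image_of_linearIndepOn {R M ι : Type*} [Semiring R] [AddCommMonoid M]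
    [Module R M] {v : ι → M} {s t : Set ι} (hv : LinearIndepOn R v (s ∪ t)) :
    span R (v '' s) ⊓ span R (v '' t) = span R (v '' (s ∩ t)) := by
  refine le_antisymm ?_ (le_inf (span_mono (Set.image_mono Set.inter_subset_left))
    (span_mono (Set.image_mono Set.inter_subset_right)))
  rintro x ⟨hxs, hxt⟩
  rw [SetLike.mem_coe, Finsupp.mem_span_image_iff_linearCombination] at hxs hxt
  obtain ⟨f, hf, rfl⟩ := hxs
  obtain ⟨g, hg, hgf⟩ := hxt
  obtain rfl : g = f := linearIndepOn_iffₛ.mp hv g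
    (Finsupp.supported_mono Set.subset_union_right hg) f
    (Finsupp.supported_mono Set.subset_union_left hf) hgf
  rw [Finsupp.mem_span_image_iff_linearCombination, Finsupp.supported_inter]
  exact ⟨g, ⟨hf, hg⟩, rfl⟩

/-- A family of vectors is in general position up to size `n` if any `n` or fewer of its members
with distinct indices are linearly independent. For the lifted vertices of a polygon in
`d`-dimensional projective space the relevant size is `n = d + 1`. -/
def InGeneralPosition (R : Type*) {M ι : Type*} [Semiring R] [AddCommMonoid M] [Module R M]
    (n : ℕ) (v : ι → M) : Prop :=
  ∀ S : Finset ι, S.card ≤ n → LinearIndepOn R v (S : Set ι)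

namespace InGeneralPosition

theorem comp_injective {R M ι κ : Type*} [Semiring R] [AddCommMonoid M] [Module R M] {n : ℕ}
    {v : ι → M} (hv : InGeneralPosition R n v) {f : κ → ι} (hf : f.Injective) :
    InGeneralPosition R n (v ∘ f) := by
  classical
  intro S hS
  have hindep : LinearIndepOn R v (f '' S) := by
    simpa only [Finset.coe_image] using hv (S.image f) (Finset.card_image_le.trans hS)
  exact hindep.comp_of_image hf.injOn

theorem finrank_span_image {R M ι : Type*} [Ring R] [StrongRankCondition R] [AddCommGroup M]
    [Module R M] {n : ℕ} {v : ι → M} (hv : InGeneralPosition R n v) {S : Finset ι}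
    (hS : S.card ≤ n) : finrank R (span R (v '' S)) = S.card := by
  have := nontrivial_of_invariantBasisNumber R
  rw [Set.image_eq_range]
  exact (finrank_span_eq_card (hv S hS)).trans (Fintype.card_coe S)

section DivisionRing

variable {K E ι : Type*} [DivisionRing K] [AddCommGroup E] [Module K E] {n : ℕ} {v : ι → E}

theorem span_image_eq_top [Module.Finite K E] (hv : InGeneralPosition K n v)
    (hE : finrank K E = n) {S : Finset ι} (hS : n ≤ S.card) : span K (v '' S) = ⊤ := by
  obtain ⟨T, hTS, rfl⟩ := Finset.exists_subset_card_eq hS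
  have hT : span K (v '' T) = ⊤ :=
    eq_top_of_finrank_eq ((hv.finrank_span_image le_rfl).trans hE.symm)
  exact top_le_iff.mp (hT ▸ span_mono (Set.image_mono (Finset.coe_subset.mpr hTS)))

theorem finrank_span_image_inf_add [Module.Finite K E] [DecidableEq ι]
    (hv : InGeneralPosition K n v) (hE : finrank K E = n) {S T : Finset ι} (hS : S.card ≤ n)
    (hT : T.card ≤ n) (hST : n ≤ (S ∪ T).card) :
    finrank K ↥(span K (v '' S) ⊓ span K (v '' T)) + n = S.card + T.card := by
  have hsup : span K (v '' S) ⊔ span K (v '' T) = ⊤ := by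
    rw [← span_union, ← Set.image_union, ← Finset.coe_union, hv.span_image_eq_top hE hST]
  have hdim := finrank_sup_add_finrank_inf_eq (span K (v '' S)) (span K (v '' T))
  rw [hsup, finrank_top, hE, hv.finrank_span_image hS, hv.finrank_span_image hT] at hdim
  rw [add_comm, hdim]

theorem iInf_span_image_Ico {u : ℤ → E} {d : ℕ}
    (hu : InGeneralPosition K (d + 1) u) (hE : finrank K E = d + 1) (r : ℕ) :
    ⨅ i ∈ Finset.range r, span K (u '' Set.Ico (-i : ℤ) (-i + d)) =
      span K (u '' Set.Ico 0 (d + 1 - r)) := by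
  have : Module.Finite K E := finite_of_finrank_eq_succ hE
  induction r with
  | zero =>
    simpa using (hu.span_image_eq_top hE (S := Finset.Ico 0 (d + 1)) (by simp)).symm
  | succ r ih =>
    have hindep : LinearIndepOn K u (Set.Ico (-r : ℤ) (-r + d) ∪ Set.Ico 0 (d + 1 - r)) :=
      (hu (Finset.Ico (-r) (d + 1 - r)) (by rw [Int.card_Ico]; omega)).mono fun x hx => by
        simp only [Set.mem_union, Set.mem_Ico, Finset.coe_Ico] at hx ⊢
        omega
    have hinter : Set.Ico (-r : ℤ) (-r + d) ∩ Set.Ico 0 (d + 1 - r) =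
        Set.Ico 0 (d + 1 - (r + 1 : ℕ) : ℤ) := by
      ext x
      simp only [Set.mem_inter_iff, Set.mem_Ico]
      omega
    rw [Finset.range_add_one, Finset.iInf_insert, ih,
      span_image_inf_span_image_of_linearIndepOn hindep, hinter]

end DivisionRing

end InGeneralPosition

/-- The `m`-diagonal hyperplane `Π_j` of a polygon with lifted vertices `V`, i.e. the span of the
`d` vectors `V j, V (j + m), …, V (j + (d - 1) * m)`. -/
def diagonalHyperplane (R : Type*) {M : Type*} [Semiring R] [AddCommMonoid M] [Module R M]
    (m : ℤ) (d : ℕ) (V : ℤ → M) (j : ℤ) : Submodule R M :=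
  span R (Set.range fun i : Fin d => V (j + (i : ℤ) * m))

theorem diagonalHyperplane_add_mul {R M : Type*} [Semiring R] [AddCommMonoid M] [Module R M]
    (m : ℤ) (d : ℕ) (V : ℤ → M) (a c : ℤ) :
    diagonalHyperplane R m d V (a + c * m) =
      span R ((fun i => V (a + i * m)) '' Set.Ico c (c + d)) := by
  unfold diagonalHyperplane
  congr 1
  ext x
  constructor
  · rintro ⟨i, rfl⟩
    exact ⟨c + i, by simp, by ring_nf⟩
  · rintro ⟨y, ⟨hcy, hyc⟩, rfl⟩
    lift y - c to ℕ using by omega with i hi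
    obtain rfl : y = c + i := by omega
    exact ⟨⟨i, by omega⟩, by ring_nf⟩

namespace IsAPWith

theorem nonempty {m : ℤ} {A : Finset ℤ} (hA : IsAPWith m A) : A.Nonempty := by
  obtain ⟨a, s, rfl⟩ := hA
  simp

theorem coe_eq_image_Ico {m : ℤ} (hm : 0 < m) {A : Finset ℤ} (hA : IsAPWith m A) :
    (A : Set ℤ) = (fun i : ℤ => A.min' hA.nonempty + i * m) '' Set.Ico 0 (A.card : ℤ) := by
  obtain ⟨a, s, rfl⟩ := id hA
  have hmin : Finset.min' _ hA.nonempty = a := by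
    refine le_antisymm (Finset.min'_le _ _ ?_) (Finset.le_min' _ _ _ ?_)
    · exact Finset.mem_image.mpr ⟨0, by simp, by simp⟩
    · simp only [Finset.mem_image]
      rintro _ ⟨i, -, rfl⟩
      exact le_add_of_nonneg_right (by positivity)
  have hcard : (Finset.image (fun i : ℕ => a + i * m) (Finset.range (s + 1))).card = s + 1 := by
    rw [Finset.card_image_of_injective, Finset.card_range]
    intro i j hij
    simpa [hm.ne'] using hij
  rw [hmin, hcard, Finset.coe_image, Finset.coe_range, ← Nat.image_cast_int_Iio, Set.image_image]

theorem iInf_diagonalHyperplane {K E : Type*} [DivisionRing K] [AddCommGroup E] [Module K E]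
    {m : ℤ} (hm : 0 < m) {A : Finset ℤ} (hA : IsAPWith m A) {d r : ℕ}
    {V : ℤ → E} (hV : InGeneralPosition K (d + 1) V) (hE : finrank K E = d + 1)
    (hr : r + A.card = d + 1) (k : ℤ) :
    ⨅ j ∈ (Finset.range r).image (fun i : ℕ => A.min' hA.nonempty - i * m),
      diagonalHyperplane K m d V (k + j) = span K ((fun j => V (k + j)) '' A) := by
  set a := A.min' hA.nonempty
  have hinj : Function.Injective fun i : ℤ => k + a + i * m := fun i j hij => by
    simpa [hm.ne'] using hij
  calc ⨅ j ∈ (Finset.range r).image (fun i : ℕ => a - i * m), diagonalHyperplane K m d V (k + j)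
    _ = ⨅ i ∈ Finset.range r,
          span K ((fun i => V (k + a + i * m)) '' Set.Ico (-i : ℤ) (-i + d)) := by
      simp only [Finset.iInf_finset_image, ← diagonalHyperplane_add_mul, neg_mul, sub_eq_add_neg,
        ← add_assoc]
    _ = span K ((fun i => V (k + a + i * m)) '' Set.Ico 0 (d + 1 - r)) :=
      (hV.comp_injective hinj).iInf_span_image_Ico hE r
    _ = span K ((fun j => V (k + j)) '' A) := by
      rw [hA.coe_eq_image_Ico hm, Set.image_image, show (d + 1 - r : ℤ) = A.card by omega]
      simp only [a, add_assoc]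

end IsAPWith

theorem statement14_general {K E : Type*} [DivisionRing K] [AddCommGroup E] [Module K E]
    {m : ℤ} (hm : 0 < m) {Ap Am : Finset ℤ} (hAp : IsAPWith m Ap) (hAm : IsAPWith m Am)
    (hdisj : Disjoint Ap Am) {d : ℕ} (hd : d + 2 = Ap.card + Am.card) {Bp Bm : Finset ℤ}
    (hBp : Bp = (Finset.range (Am.card - 1)).image
      (fun i : ℕ => Ap.min' hAp.nonempty - (i : ℤ) * m))
    (hBm : Bm = (Finset.range (Ap.card - 1)).image
      (fun i : ℕ => Am.min' hAm.nonempty - (i : ℤ) * m))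
    (hE : finrank K E = d + 1) {V : ℤ → E} (hV : InGeneralPosition K (d + 1) V) (k : ℤ) :
    ⨅ j ∈ Bp ∪ Bm, diagonalHyperplane K m d V (k + j) =
        span K ((fun j => V (k + j)) '' Ap) ⊓ span K ((fun j => V (k + j)) '' Am) ∧
      finrank K ↥(span K ((fun j => V (k + j)) '' Ap) ⊓
        span K ((fun j => V (k + j)) '' Am)) = 1 := by
  have : Module.Finite K E := finite_of_finrank_eq_succ hE
  have hApos := hAp.nonempty.card_pos
  have hAmpos := hAm.nonempty.card_pos
  constructor
  · rw [hBp, hBm, Finset.iInf_union, hAp.iInf_diagonalHyperplane hm hV hE (by omega),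
      hAm.iInf_diagonalHyperplane hm hV hE (by omega)]
  · have hunion : (Ap ∪ Am).card = d + 2 := by rw [Finset.card_union_of_disjoint hdisj, hd]
    have hshift : InGeneralPosition K (d + 1) fun j => V (k + j) :=
      hV.comp_injective (add_right_injective k)
    have hdim := hshift.finrank_span_image_inf_add hE (S := Ap) (T := Am)
      (by omega) (by omega) (by omega)
    omega

/-- Proposition 3.1 on the level of lifts: for a polygon in general
position, the intersection of the `m`-diagonal hyperplanes spaced out by `B₊ ∪ B₋`
(with `B₊ = {min A₊ − i·m : 0 ≤ i ≤ |A₋|−2}`, `B₋ = {min A₋ − i·m : 0 ≤ i ≤ |A₊|−2}`)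
equals the intersection `span⟨V_{k+j} : j∈A₊⟩ ∩ span⟨V_{k+j} : j∈A₋⟩`, and this subspace
is one-dimensional: the bi-diagonal map coincides with the long-diagonal map. -/
theorem statement14 (m : ℤ) (hm : 1 ≤ m) (Ap Am : Finset ℤ)
    (hAPp : IsAPWith m Ap) (hAPm : IsAPWith m Am) (hdisj : Disjoint Ap Am)
    (h2p : 2 ≤ Ap.card) (h2m : 2 ≤ Am.card)
    (d : ℕ) (hd : d = Ap.card + Am.card - 2)
    (Bp Bm : Finset ℤ)
    (hBp : Bp = (Finset.range (Am.card - 1)).image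
      (fun i : ℕ => Ap.min' (Finset.card_pos.mp (by omega)) - (i : ℤ) * m))
    (hBm : Bm = (Finset.range (Ap.card - 1)).image
      (fun i : ℕ => Am.min' (Finset.card_pos.mp (by omega)) - (i : ℤ) * m))
    (V : ℤ → Fin (d + 1) → ℝ)
    (hgen : ∀ S : Finset ℤ, S.card ≤ d + 1 → LinearIndependent ℝ (fun i : S => V i)) :
    ∀ k : ℤ,
      (⨅ j ∈ Bp ∪ Bm,
        Submodule.span ℝ (Set.range fun i : Fin d => V (k + j + (i : ℤ) * m))) =
      Submodule.span ℝ ((fun j => V (k + j)) '' (Ap : Set ℤ)) ⊓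
        Submodule.span ℝ ((fun j => V (k + j)) '' (Am : Set ℤ)) ∧
      Module.finrank ℝ
        ↥(Submodule.span ℝ ((fun j => V (k + j)) '' (Ap : Set ℤ)) ⊓
          Submodule.span ℝ ((fun j => V (k + j)) '' (Am : Set ℤ))) = 1 := by
  exact statement14_general hm hAPp hAPm hdisj (by omega) hBp hBm (finrank_fin_fun ℝ) hgen
end
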